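/- Let 0 < ρ < ∞ and 0 ≤ ζ ≤ ρ, let q : [0,ρ] → ℝ be continuous with q ≥ 0, let m : [0,ρ] → ℝ be differentiable with m'(r) + m(r)² + q(r) ≤ 0 on [0,ρ], with m ≥ 0 on [0,ζ] and m ≤ 0 on [ζ,ρ]. Let ψ : [0,ρ] → ℝ be positive, continuously differentiable and monotone (either non-decreasing or non-increasing on [0,ρ]). Then ∫₀^ρ ψ(r)q(r)/(ψ(r)² + q(r)) dr ≤ 2 + (1/4)·|log(ψ(ρ)/ψ(0))|. -/

import Mathlib

open Set MeasureTheory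

/-!
For every `n ≥ 0` and `q ≥ 0` one has `ψ q / (ψ² + q) ≤ ψ (n² + q) / (ψ + n)²`, because after
clearing denominators this is `(n ψ - q)² ≥ 0`. Take `n = |m|`. The Riccati inequality
`m² + q ≤ -m'` bounds the right-hand side by `-ψ m' / (ψ + |m|)²`, which, on an interval where
`m` has constant sign `e`, is the derivative of `e ψ / (ψ + e m)` up to the term
`ψ' m / (ψ + |m|)²`. Since `4 ψ |m| ≤ (ψ + |m|)²`, that term is at most `|ψ'| / (4 ψ)` in
absolute value, and this is the derivative of `± (1/4) log ψ`, by monotonicity of `ψ`. As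
`ψ / (ψ + |m|)` lies in `[0, 1]`, each of the two intervals `[0, ζ]` and `[ζ, ρ]` contributes at
most `1` plus its share of the logarithm.

Integrability of `m'` is never needed: only the continuous integrand is integrated, and it is
dominated pointwise by the derivative of a primitive (`integral_le_of_sign`).
-/

/-- The pointwise differential inequality. Here `n` is `|m|`, the sign of `m` is `e`, the sign of
`ψ'` is `s`, and the variables `p`, `p'` and `m'` are the values of `ψ`, `ψ'` and `m'`. -/
lemma integrand_le {p p' q m m' e s : ℝ} (hp : 0 < p) (hq : 0 ≤ q) (he : e ^ 2 = 1)
    (hs : s ^ 2 = 1) (hem : 0 ≤ e * m) (hsp : 0 ≤ s * p') (hric : m' + m ^ 2 + q ≤ 0) :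
    p * q / (p ^ 2 + q) ≤
      (p' * m - p * m') / (p + e * m) ^ 2 + s / 4 * (p' / p) := by
  obtain ⟨n, hn⟩ : ∃ n, n = e * m := ⟨_, rfl⟩
  have hn0 : 0 ≤ n := hn ▸ hem
  have hm2 : m ^ 2 = n ^ 2 := by rw [hn, mul_pow, he, one_mul]
  rw [← hn]
  have hpn : 0 < (p + n) ^ 2 := by positivity
  have h1 : p * q / (p ^ 2 + q) ≤ p * (n ^ 2 + q) / (p + n) ^ 2 := by
    rw [div_le_div_iff₀ (by positivity) hpn]
    nlinarith [mul_nonneg hp.le (sq_nonneg (n * p - q))]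
  have h2 : p * (n ^ 2 + q) / (p + n) ^ 2 ≤ -(p * m') / (p + n) ^ 2 := by
    gcongr
    nlinarith
  -- `p' m` is at least `-|p'| |m|`, written with the signs `s` and `e`.
  have h3 : -(s * p' * n) ≤ p' * m := by
    have habs : |p' * m| = s * p' * n := by
      rw [← abs_of_nonneg (mul_nonneg hsp hn0), ← sq_eq_sq₀ (abs_nonneg _) (abs_nonneg _),
        sq_abs, sq_abs]
      simp only [mul_pow, hs, hm2, one_mul]
    rw [← habs]
    exact neg_abs_le _
  have h4 : s * p' * n / (p + n) ^ 2 ≤ s / 4 * (p' / p) := by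
    rw [show s / 4 * (p' / p) = s * p' / (4 * p) by field_simp,
      div_le_div_iff₀ hpn (by positivity)]
    nlinarith [mul_nonneg hsp (sq_nonneg (p - n))]
  have h5 : -(s * p' * n) / (p + n) ^ 2 ≤ p' * m / (p + n) ^ 2 := by gcongr
  rw [neg_div] at h2 h5
  rw [sub_div]
  linarith

/-- The bound on an interval where `m` has constant sign `e` and `ψ'` constant sign `s`. -/
lemma integral_le_of_sign {a b e s : ℝ} (hab : a ≤ b) (he : e ^ 2 = 1) (hs : s ^ 2 = 1)
    {q m m' ψ ψ' : ℝ → ℝ}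
    (hqc : ContinuousOn q (Icc a b))
    (hq0 : ∀ r ∈ Icc a b, 0 ≤ q r)
    (hm : ∀ r ∈ Icc a b, HasDerivWithinAt m (m' r) (Icc a b) r)
    (hric : ∀ r ∈ Icc a b, m' r + (m r) ^ 2 + q r ≤ 0)
    (hem : ∀ r ∈ Icc a b, 0 ≤ e * m r)
    (hψ0 : ∀ r ∈ Icc a b, 0 < ψ r)
    (hψ : ∀ r ∈ Icc a b, HasDerivWithinAt ψ (ψ' r) (Icc a b) r)
    (hsψ : ∀ r ∈ Icc a b, 0 ≤ s * ψ' r) :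
    ∫ r in a..b, ψ r * q r / ((ψ r) ^ 2 + q r)
      ≤ 1 + s / 4 * (Real.log (ψ b) - Real.log (ψ a)) := by
  have hψc : ContinuousOn ψ (Icc a b) := fun r hr => (hψ r hr).continuousWithinAt
  have hmc : ContinuousOn m (Icc a b) := fun r hr => (hm r hr).continuousWithinAt
  have hden : ∀ r ∈ Icc a b, 0 < ψ r + e * m r := fun r hr =>
    add_pos_of_pos_of_nonneg (hψ0 r hr) (hem r hr)
  have key := intervalIntegral.integral_le_sub_of_hasDeriv_right_of_le
    (g := fun r => e * (ψ r / (ψ r + e * m r)) + s / 4 * Real.log (ψ r))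
    (g' := fun r => (ψ' r * m r - ψ r * m' r) / (ψ r + e * m r) ^ 2 + s / 4 * (ψ' r / ψ r))
    (φ := fun r => ψ r * q r / ((ψ r) ^ 2 + q r)) hab ?_ ?_ ?_ ?_
  · refine key.trans ?_
    have hfrac : ∀ r ∈ Icc a b, 0 ≤ ψ r / (ψ r + e * m r) ∧ ψ r / (ψ r + e * m r) ≤ 1 :=
      fun r hr => ⟨div_nonneg (hψ0 r hr).le (hden r hr).le,
        (div_le_one (hden r hr)).2 (by linarith [hem r hr])⟩
    obtain ⟨ha0, ha1⟩ := hfrac a (left_mem_Icc.2 hab)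
    obtain ⟨hb0, hb1⟩ := hfrac b (right_mem_Icc.2 hab)
    rcases (sq_eq_sq_iff_eq_or_eq_neg.1 (he.trans (one_pow 2).symm)) with h | h
    · simp only [h] at *; linarith
    · simp only [h] at *; linarith
  · exact (continuousOn_const.mul (hψc.div (hψc.add (continuousOn_const.mul hmc))
      fun r hr => (hden r hr).ne')).add
      (continuousOn_const.mul (hψc.log fun r hr => (hψ0 r hr).ne'))
  · intro r hr
    have hr' := Ioo_subset_Icc_self hr
    have dψ := (hψ r hr').hasDerivAt (Icc_mem_nhds hr.1 hr.2)
    have dm := (hm r hr').hasDerivAt (Icc_mem_nhds hr.1 hr.2)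
    have d := ((dψ.div (dψ.add (dm.const_mul e)) (hden r hr').ne').const_mul e).add
      ((dψ.log (hψ0 r hr').ne').const_mul (s / 4))
    refine HasDerivAt.hasDerivWithinAt (d.congr_deriv ?_)
    congr 1
    rw [← mul_div_assoc]
    congr 1
    simp only [Pi.add_apply]
    linear_combination (ψ' r * m r - ψ r * m' r) * he
  · exact (ContinuousOn.div (hψc.mul hqc) ((hψc.pow 2).add hqc) fun r hr =>
      (add_pos_of_pos_of_nonneg (pow_pos (hψ0 r hr) 2) (hq0 r hr)).ne').integrableOn_Icc
  · intro r hr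
    have hr' := Ioo_subset_Icc_self hr
    exact integrand_le (hψ0 r hr') (hq0 r hr') he hs (hem r hr') (hsψ r hr') (hric r hr')

/-- The analytic content of Theorem 1.4, inequality (1.4): along a geodesic to
the first conjugate point, with `m ≥ 0` up to the mean convex radius `ζ` and
`m ≤ 0` afterwards, for positive monotone `ψ`,
`∫₀^ρ ψq/(ψ² + q) dr ≤ 2 + (1/4)·|log(ψ(ρ)/ψ(0))|`. -/
theorem functional_segment_bound (ρ ζ : ℝ) (hρ : 0 < ρ) (hζ0 : 0 ≤ ζ)
    (hζρ : ζ ≤ ρ)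
    (q m m' ψ ψ' : ℝ → ℝ)
    (hqc : ContinuousOn q (Icc 0 ρ))
    (hq0 : ∀ r ∈ Icc 0 ρ, 0 ≤ q r)
    (hm : ∀ r ∈ Icc 0 ρ, HasDerivWithinAt m (m' r) (Icc 0 ρ) r)
    (hric : ∀ r ∈ Icc 0 ρ, m' r + (m r) ^ 2 + q r ≤ 0)
    (hm_nonneg : ∀ r ∈ Icc 0 ζ, 0 ≤ m r)
    (hm_nonpos : ∀ r ∈ Icc ζ ρ, m r ≤ 0)
    (hψ0 : ∀ r ∈ Icc 0 ρ, 0 < ψ r)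
    (hψ : ∀ r ∈ Icc 0 ρ, HasDerivWithinAt ψ (ψ' r) (Icc 0 ρ) r)
    (hψ'c : ContinuousOn ψ' (Icc 0 ρ))
    (hmono : MonotoneOn ψ (Icc 0 ρ) ∨ AntitoneOn ψ (Icc 0 ρ)) :
    ∫ r in (0:ℝ)..ρ, ψ r * q r / ((ψ r) ^ 2 + q r)
      ≤ 2 + (1 / 4) * |Real.log (ψ ρ / ψ 0)| := by
  obtain ⟨s, hs, hsψ⟩ : ∃ s : ℝ, s ^ 2 = 1 ∧ ∀ r ∈ Icc 0 ρ, 0 ≤ s * ψ' r := by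
    have hd : ∀ r ∈ Icc 0 ρ, derivWithin ψ (Icc 0 ρ) r = ψ' r := fun r hr =>
      (hψ r hr).derivWithin (uniqueDiffOn_Icc hρ r hr)
    rcases hmono with h | h
    · refine ⟨1, by norm_num, fun r hr => ?_⟩
      rw [← hd r hr, one_mul]
      exact h.derivWithin_nonneg
    · refine ⟨-1, by norm_num, fun r hr => ?_⟩
      rw [← hd r hr]
      have := h.derivWithin_nonpos (x := r)
      linarith
  have hs1 : |s| = 1 := by rw [← sq_eq_sq₀ (abs_nonneg s) zero_le_one, sq_abs, hs, one_pow]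
  have h1s : Icc 0 ζ ⊆ Icc 0 ρ := Icc_subset_Icc_right hζρ
  have h2s : Icc ζ ρ ⊆ Icc 0 ρ := Icc_subset_Icc_left hζ0
  have I1 := integral_le_of_sign (e := 1) hζ0 (by norm_num) hs (hqc.mono h1s)
    (fun r hr => hq0 r (h1s hr)) (fun r hr => (hm r (h1s hr)).mono h1s)
    (fun r hr => hric r (h1s hr)) (fun r hr => by linarith [hm_nonneg r hr])
    (fun r hr => hψ0 r (h1s hr)) (fun r hr => (hψ r (h1s hr)).mono h1s)
    (fun r hr => hsψ r (h1s hr))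
  have I2 := integral_le_of_sign (e := -1) hζρ (by norm_num) hs (hqc.mono h2s)
    (fun r hr => hq0 r (h2s hr)) (fun r hr => (hm r (h2s hr)).mono h2s)
    (fun r hr => hric r (h2s hr)) (fun r hr => by linarith [hm_nonpos r hr])
    (fun r hr => hψ0 r (h2s hr)) (fun r hr => (hψ r (h2s hr)).mono h2s)
    (fun r hr => hsψ r (h2s hr))
  have hψc : ContinuousOn ψ (Icc 0 ρ) := fun r hr => (hψ r hr).continuousWithinAt
  have hfc : ContinuousOn (fun r => ψ r * q r / ((ψ r) ^ 2 + q r)) (Icc 0 ρ) :=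
    ContinuousOn.div (hψc.mul hqc) ((hψc.pow 2).add hqc) fun r hr =>
      (add_pos_of_pos_of_nonneg (pow_pos (hψ0 r hr) 2) (hq0 r hr)).ne'
  rw [← intervalIntegral.integral_add_adjacent_intervals
    ((hfc.mono h1s).intervalIntegrable_of_Icc hζ0) ((hfc.mono h2s).intervalIntegrable_of_Icc hζρ),
    Real.log_div (hψ0 ρ (right_mem_Icc.2 hρ.le)).ne' (hψ0 0 (left_mem_Icc.2 hρ.le)).ne']
  have hlog : s * (Real.log (ψ ρ) - Real.log (ψ 0)) ≤ |Real.log (ψ ρ) - Real.log (ψ 0)| := by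
    refine (le_abs_self _).trans ?_
    rw [abs_mul, hs1, one_mul]
  linarith
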